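/- arXiv:2304.13695 — 2 statements merged into one kernel-verified Lean document; each statement's English description precedes it below -/
import Mathlib

section
/- Let ℱ be a finite set of graphs containing a bipartite graph F, and set γ = |V(F)| with γ ≥ 2. Let ε > 0 and let k be an integer with k ≥ (2+ε)·(γ−1)/ε. Let V₀,V₁,…,V_r be a k-biclique decomposition of a finite simple graph G, and let S₀ ⊆ V₀ be a solution for Subgraph Hitting on (G[V₀],ℱ) with |S₀| ≤ (2+ε)·opt(G[V₀],ℱ). Then S = S₀ ∪ V₁ ∪ … ∪ V_r is a solution for Subgraph Hitting on (G,ℱ) and |S| ≤ (2+ε)·opt(G,ℱ). -/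
/-- `G` contains a subgraph isomorphic to `F` whose vertices all lie in the set `A`. -/
def HasSubCopyIn {α β : Type} (G : SimpleGraph α) (F : SimpleGraph β)
    (A : Set α) : Prop :=
  ∃ f : β ↪ α, (∀ x, f x ∈ A) ∧ ∀ u v, F.Adj u v → G.Adj (f u) (f v)

/-- `S` is a solution for Subgraph Hitting on `(G[A], ℱ)`. -/
def IsSubSolutionOn {α ι : Type} {β : ι → Type} (G : SimpleGraph α)
    (F : ∀ i, SimpleGraph (β i)) (A S : Finset α) : Prop :=
  ∀ i, ¬ HasSubCopyIn G (F i) ((↑A : Set α) \ (↑S : Set α))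

/-- `opt(G[A], ℱ)`: minimum size of a solution for Subgraph Hitting on `(G[A], ℱ)`. -/
noncomputable def optSubOn {α ι : Type} {β : ι → Type} (G : SimpleGraph α)
    (F : ∀ i, SimpleGraph (β i)) (A : Finset α) : ℕ :=
  sInf {n | ∃ S : Finset α, S ⊆ A ∧ IsSubSolutionOn G F A S ∧ S.card = n}

/-- `G[A]` is (induced-)isomorphic to the complete bipartite graph `K_{k,k}`. -/
def IsBicliqueOn {α : Type} (G : SimpleGraph α) (k : ℕ) (A : Finset α) : Prop :=
  ∃ f : (Fin k ⊕ Fin k) ↪ α, (∀ x, f x ∈ A) ∧ (∀ y ∈ A, ∃ x, f x = y) ∧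
    ∀ u v, (completeBipartiteGraph (Fin k) (Fin k)).Adj u v ↔ G.Adj (f u) (f v)

/-!
The optimum is superadditive over disjoint vertex sets, since an optimal solution of the union
restricts to a solution of each part. In a biclique `K_{k,k}` a solution of size at most `k - γ`
would leave at least `γ` vertices on each side, and the bipartite graph `F` on `γ` vertices embeds
into those. Hence the optimum of a biclique is at least `k - γ + 1`, and a ratio `c` with
`c * (γ - 1) ≤ (c - 2) * k` pays for taking all its `2 * k` vertices.
-/

section SubgraphHitting

open Finset
open scoped SimpleGraph

theorem exists_embedding_forall_apply_notMem {α β ι : Type*} [Fintype β] [Fintype ι]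
    (g : ι ↪ α) (T : Finset α) (h : #T + Fintype.card β ≤ Fintype.card ι) :
    ∃ e : β ↪ ι, ∀ x, g (e x) ∉ T := by
  classical
  have hmem : Fintype.card {j // g j ∈ T} ≤ #T := by
    simpa using Fintype.card_le_of_embedding (g.subtypeMap (q := (· ∈ T)) fun _ hj ↦ hj)
  have hnotMem : Fintype.card β ≤ Fintype.card {j // g j ∉ T} := by
    rw [Fintype.card_subtype_compl]
    lia
  obtain ⟨e⟩ := Function.Embedding.nonempty_of_card_le hnotMem
  exact ⟨e.trans (.subtype _), fun x ↦ (e x).2⟩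

theorem isContained_completeBipartiteGraph_of_isBipartite {β : Type*} {F : SimpleGraph β}
    (hF : F.IsBipartite) : F ⊑ completeBipartiteGraph β β := by
  have c : F.Coloring Bool := hF.toColoring (by simp)
  refine ⟨⟨⟨fun x ↦ if c x then .inl x else .inr x, fun {u v} huv ↦ ?_⟩, fun u v huv ↦ ?_⟩⟩
  · have hne := c.valid huv
    cases hu : c u <;> cases hv : c v <;> simp_all
  · cases hu : c u <;> cases hv : c v <;> simp_all

variable {α σ τ ι : Type} {κ : Type*} {G : SimpleGraph α}

theorem HasSubCopyIn.mono {F : SimpleGraph σ} {A B : Set α} (h : HasSubCopyIn G F A)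
    (hAB : A ⊆ B) : HasSubCopyIn G F B := by
  obtain ⟨f, hfA, hadj⟩ := h
  exact ⟨f, fun x ↦ hAB (hfA x), hadj⟩

theorem HasSubCopyIn.of_isContained {F : SimpleGraph σ} {H : SimpleGraph τ} {A : Set α}
    (h : HasSubCopyIn G H A) (hFH : F ⊑ H) : HasSubCopyIn G F A := by
  obtain ⟨f, hfA, hadj⟩ := h
  obtain ⟨g⟩ := hFH
  exact ⟨g.toEmbedding.trans f, fun x ↦ hfA (g x), fun u v huv ↦ hadj _ _ (g.toHom.map_adj huv)⟩

namespace IsBicliqueOn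

theorem card_eq {k : ℕ} {A : Finset α} (hA : IsBicliqueOn G k A) : #A = 2 * k := by
  obtain ⟨f, hfA, hsurj, -⟩ := hA
  have hmap : univ.map f = A := by
    ext y
    simp only [mem_map, mem_univ, true_and]
    exact ⟨fun ⟨x, hx⟩ ↦ hx ▸ hfA x, hsurj y⟩
  simp [← hmap, two_mul]

theorem hasSubCopyIn_sdiff [Fintype σ] [Fintype τ] {k : ℕ} {A T : Finset α}
    (hA : IsBicliqueOn G k A) (hσ : #T + Fintype.card σ ≤ k) (hτ : #T + Fintype.card τ ≤ k) :
    HasSubCopyIn G (completeBipartiteGraph σ τ) (↑A \ ↑T) := by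
  obtain ⟨f, hfA, -, hadj⟩ := hA
  obtain ⟨a, ha⟩ := exists_embedding_forall_apply_notMem (β := σ)
    (Function.Embedding.inl.trans f) T (by simpa using hσ)
  obtain ⟨b, hb⟩ := exists_embedding_forall_apply_notMem (β := τ)
    (Function.Embedding.inr.trans f) T (by simpa using hτ)
  refine ⟨(a.sumMap b).trans f, fun x ↦ ⟨hfA _, ?_⟩, fun u v huv ↦ (hadj _ _).1 ?_⟩
  · rcases x with x | x
    exacts [ha x, hb x]
  · rcases u with u | u <;> rcases v with v | v <;> simp_all

end IsBicliqueOn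

variable {β : ι → Type} {F : ∀ i, SimpleGraph (β i)}

namespace IsSubSolutionOn

theorem of_sdiff_subset [DecidableEq α] {A B S T : Finset α} (h : IsSubSolutionOn G F A S)
    (hsub : B \ T ⊆ A \ S) : IsSubSolutionOn G F B T :=
  fun i hi ↦ h i (hi.mono (by exact_mod_cast hsub))

protected theorem nonempty {A S : Finset α} (h : IsSubSolutionOn G F A S) (i : ι) :
    Nonempty (β i) := by
  by_contra hempty
  rw [not_nonempty_iff] at hempty
  exact h i ⟨.ofIsEmpty, isEmptyElim, isEmptyElim⟩

end IsSubSolutionOn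

theorem isSubSolutionOn_self [∀ i, Nonempty (β i)] (A : Finset α) : IsSubSolutionOn G F A A := by
  rintro i ⟨f, hf, -⟩
  obtain ⟨x⟩ : Nonempty (β i) := inferInstance
  exact (hf x).2 (hf x).1

theorem exists_isSubSolutionOn_card_eq_optSubOn [∀ i, Nonempty (β i)] (A : Finset α) :
    ∃ S ⊆ A, IsSubSolutionOn G F A S ∧ #S = optSubOn G F A :=
  Nat.sInf_mem (s := {n | ∃ S ⊆ A, IsSubSolutionOn G F A S ∧ #S = n})
    ⟨#A, A, Subset.rfl, isSubSolutionOn_self A, rfl⟩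

theorem optSubOn_le_card_inter [DecidableEq α] {A B S : Finset α} (hAB : A ⊆ B)
    (hS : IsSubSolutionOn G F B S) : optSubOn G F A ≤ #(A ∩ S) :=
  Nat.sInf_le ⟨A ∩ S, inter_subset_left, hS.of_sdiff_subset (by grind), rfl⟩

theorem optSubOn_add_optSubOn_le [DecidableEq α] [∀ i, Nonempty (β i)] {A B : Finset α}
    (hAB : Disjoint A B) : optSubOn G F A + optSubOn G F B ≤ optSubOn G F (A ∪ B) := by
  obtain ⟨S, -, hS, hcard⟩ := exists_isSubSolutionOn_card_eq_optSubOn (G := G) (F := F) (A ∪ B)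
  calc optSubOn G F A + optSubOn G F B
      ≤ #(A ∩ S) + #(B ∩ S) := add_le_add (optSubOn_le_card_inter subset_union_left hS)
        (optSubOn_le_card_inter subset_union_right hS)
    _ = #((A ∪ B) ∩ S) := by
        rw [union_inter_distrib_right,
          card_union_of_disjoint (hAB.mono inter_subset_left inter_subset_left)]
    _ ≤ #S := card_le_card inter_subset_right
    _ = optSubOn G F (A ∪ B) := hcard

theorem sum_optSubOn_le_optSubOn_biUnion [DecidableEq α] [∀ i, Nonempty (β i)] {s : Finset κ}
    {V : κ → Finset α} (hV : (s : Set κ).PairwiseDisjoint V) :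
    ∑ j ∈ s, optSubOn G F (V j) ≤ optSubOn G F (s.biUnion V) := by
  classical
  induction s using Finset.induction_on with
  | empty => simp
  | insert j s hj ih =>
    rw [coe_insert, Set.pairwiseDisjoint_insert_of_notMem (by simpa using hj)] at hV
    rw [sum_insert hj, biUnion_insert]
    have hdisj : Disjoint (V j) (s.biUnion V) := (disjoint_biUnion_right _ _ _).2 hV.2
    exact (Nat.add_le_add_left (ih hV.1) _).trans (optSubOn_add_optSubOn_le hdisj)

namespace IsBicliqueOn

variable [∀ i, Nonempty (β i)] {i₀ : ι} [Fintype (β i₀)] {k : ℕ} {A : Finset α}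

theorem lt_optSubOn_add_card (hA : IsBicliqueOn G k A) (hF : (F i₀).IsBipartite) :
    k < optSubOn G F A + Fintype.card (β i₀) := by
  obtain ⟨T, -, hT, hcard⟩ := exists_isSubSolutionOn_card_eq_optSubOn (G := G) (F := F) A
  by_contra! hle
  rw [← hcard] at hle
  exact hT i₀ ((hA.hasSubCopyIn_sdiff hle hle).of_isContained
    (isContained_completeBipartiteGraph_of_isBipartite hF))

theorem card_le_mul_optSubOn (hA : IsBicliqueOn G k A) (hF : (F i₀).IsBipartite) {c : ℝ}
    (hc : 0 ≤ c) (hk : c * (Fintype.card (β i₀) - 1) ≤ (c - 2) * k) :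
    (#A : ℝ) ≤ c * optSubOn G F A := by
  have hlt : (k : ℝ) + 1 ≤ optSubOn G F A + Fintype.card (β i₀) := by
    exact_mod_cast hA.lt_optSubOn_add_card hF
  calc (#A : ℝ) = 2 * k := by exact_mod_cast hA.card_eq
    _ ≤ c * (k + 1 - Fintype.card (β i₀)) := by linarith
    _ ≤ c * optSubOn G F A := by gcongr; linarith

end IsBicliqueOn

theorem card_union_biUnion_le_mul_optSubOn [DecidableEq α] [∀ i, Nonempty (β i)]
    {V₀ S₀ : Finset α} {s : Finset κ} {V : κ → Finset α} {c : ℝ} (hc : 0 ≤ c)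
    (hV₀ : ∀ j ∈ s, Disjoint V₀ (V j)) (hV : (s : Set κ).PairwiseDisjoint V)
    (hS₀ : (#S₀ : ℝ) ≤ c * optSubOn G F V₀)
    (hcard : ∀ j ∈ s, (#(V j) : ℝ) ≤ c * optSubOn G F (V j)) :
    (#(S₀ ∪ s.biUnion V) : ℝ) ≤ c * optSubOn G F (V₀ ∪ s.biUnion V) := by
  have hopt : optSubOn G F V₀ + ∑ j ∈ s, optSubOn G F (V j) ≤
      optSubOn G F (V₀ ∪ s.biUnion V) :=
    (Nat.add_le_add_left (sum_optSubOn_le_optSubOn_biUnion hV) _).trans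
      (optSubOn_add_optSubOn_le ((disjoint_biUnion_right _ _ _).2 hV₀))
  calc (#(S₀ ∪ s.biUnion V) : ℝ)
      ≤ #S₀ + ∑ j ∈ s, (#(V j) : ℝ) := by
        exact_mod_cast (card_union_le _ _).trans (Nat.add_le_add_left card_biUnion_le _)
    _ ≤ c * optSubOn G F V₀ + ∑ j ∈ s, c * optSubOn G F (V j) :=
        add_le_add hS₀ (sum_le_sum hcard)
    _ = c * ↑(optSubOn G F V₀ + ∑ j ∈ s, optSubOn G F (V j)) := by
        push_cast
        rw [← mul_sum, mul_add]
    _ ≤ c * optSubOn G F (V₀ ∪ s.biUnion V) := by gcongr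

theorem stmt17_general [DecidableEq α] {i₀ : ι} [Fintype (β i₀)] (hF : (F i₀).IsBipartite)
    {c : ℝ} (hc : 0 ≤ c) {k : ℕ} (hk : c * (Fintype.card (β i₀) - 1) ≤ (c - 2) * k)
    {V₀ S₀ : Finset α} {s : Finset κ} {V : κ → Finset α}
    (hV₀ : ∀ j ∈ s, Disjoint V₀ (V j)) (hV : (s : Set κ).PairwiseDisjoint V)
    (hbiclique : ∀ j ∈ s, IsBicliqueOn G k (V j))
    (hS₀ : IsSubSolutionOn G F V₀ S₀) (hS₀card : (#S₀ : ℝ) ≤ c * optSubOn G F V₀) :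
    IsSubSolutionOn G F (V₀ ∪ s.biUnion V) (S₀ ∪ s.biUnion V) ∧
      (#(S₀ ∪ s.biUnion V) : ℝ) ≤ c * optSubOn G F (V₀ ∪ s.biUnion V) := by
  have : ∀ i, Nonempty (β i) := hS₀.nonempty
  exact ⟨hS₀.of_sdiff_subset (by grind), card_union_biUnion_le_mul_optSubOn hc hV₀ hV hS₀card
    fun j hj ↦ (hbiclique j hj).card_le_mul_optSubOn hF hc hk⟩

end SubgraphHitting

/-- let `ℱ` contain a bipartite graph `F i₀` with `γ = |V(F i₀)| ≥ 2`,
let `ε > 0` and `k ≥ (2+ε)(γ−1)/ε`.  Let `V₀, V₁, …, V_r` be a `k`-biclique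
decomposition of `G` and let `S₀ ⊆ V₀` be a solution for Subgraph Hitting on
`(G[V₀], ℱ)` with `|S₀| ≤ (2+ε)·opt(G[V₀], ℱ)`.  Then `S = S₀ ∪ V₁ ∪ … ∪ V_r` is
a solution for Subgraph Hitting on `(G, ℱ)` and `|S| ≤ (2+ε)·opt(G, ℱ)`. -/
theorem stmt17 {ι : Type} [Fintype ι] {β : ι → Type} [∀ i, Fintype (β i)]
    (F : ∀ i, SimpleGraph (β i))
    (i₀ : ι) (hbip : (F i₀).Colorable 2)
    (γ : ℕ) (hγdef : γ = Fintype.card (β i₀)) (hγ : 2 ≤ γ)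
    {α : Type} [Fintype α] [DecidableEq α] (G : SimpleGraph α)
    (ε : ℝ) (hε : 0 < ε) (k : ℕ)
    (hk : (2 + ε) * ((γ : ℝ) - 1) / ε ≤ (k : ℝ))
    (r : ℕ) (V0 : Finset α) (V : Fin r → Finset α)
    (hdisj0 : ∀ i, Disjoint V0 (V i))
    (hdisj : ∀ i j, i ≠ j → Disjoint (V i) (V j))
    (hcover : V0 ∪ Finset.univ.biUnion V = Finset.univ)
    (hV0free : ¬ HasSubCopyIn G (completeBipartiteGraph (Fin k) (Fin k)) (↑V0 : Set α))
    (hVbiclique : ∀ i, IsBicliqueOn G k (V i))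
    (S0 : Finset α) (hS0sub : S0 ⊆ V0)
    (hS0sol : IsSubSolutionOn G F V0 S0)
    (hS0apx : (S0.card : ℝ) ≤ (2 + ε) * (optSubOn G F V0 : ℝ)) :
    IsSubSolutionOn G F Finset.univ (S0 ∪ Finset.univ.biUnion V) ∧
      (((S0 ∪ Finset.univ.biUnion V).card : ℝ) ≤
        (2 + ε) * (optSubOn G F Finset.univ : ℝ)) := by
  have hk' : (2 + ε) * (Fintype.card (β i₀) - 1) ≤ (2 + ε - 2) * k := by
    rw [← hγdef, add_sub_cancel_left, mul_comm ε]
    exact (div_le_iff₀ hε).1 hk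
  rw [← hcover]
  exact stmt17_general hbip (by positivity) hk' (fun j _ ↦ hdisj0 j)
    (fun i _ j _ hij ↦ hdisj i j hij) (fun j _ ↦ hVbiclique j) hS0sol hS0apx
end

section
/- Let c > 0 and 0 ≤ η < 1. There exists a constant C depending only on c and η such that the following holds: for every finite simple graph G with n vertices in which every subgraph H admits a balanced separator of size at most c·|V(H)|^η, and for every β ∈ (0,1], there exists a set S ⊆ V(G) with |S| ≤ β·n such that every connected component of G − S has at most (C/β)^{1/(1−η)} vertices. -/
/-!
Deleting a balanced separator from every component with more than `s` vertices costs at most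
`c s ^ (η - 1)` times the number of vertices, and turns components of size at most `s / ρ` into
components of size at most `s`. Starting from the whole vertex set and letting `s` run down the
geometric progression `s / ρ ^ n, …, s / ρ, s`, the total cost is dominated by a geometric series
with ratio `ρ ^ (1 - η) < 1`. Hence components of size at most `s` are reached after deleting at
most a fraction `C s ^ (η - 1)` of the vertices, where `C = c / (1 - ρ ^ (1 - η))`, and this
fraction equals `β` when `s = (C / β) ^ (1 / (1 - η))`.
-/

open Set

universe u

section ConnectedComponents

variable {V : Type*} {G : SimpleGraph V} {U T : Set V} {s : ℝ}

theorem sum_ncard_supp [Finite V] [Fintype G.ConnectedComponent] :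
    ∑ K : G.ConnectedComponent, K.supp.ncard = Nat.card V := by
  rw [← ncard_univ, ← G.iUnion_connectedComponentSupp,
    ncard_iUnion_of_finite (fun _ ↦ toFinite _) G.pairwise_disjoint_supp_connectedComponent,
    finsum_eq_sum_of_fintype]

theorem connected_induce_image_supp (K : (G.induce U).ConnectedComponent) :
    (G.induce (Subtype.val '' K.supp)).Connected := by
  let f : K.toSimpleGraph →g G.induce (Subtype.val '' K.supp) :=
    { toFun := fun x ↦ ⟨x, mem_image_of_mem _ x.2⟩
      map_rel' := id }
  refine K.connected_toSimpleGraph.map f ?_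
  rintro ⟨_, x, hx, rfl⟩
  exact ⟨⟨x, hx⟩, rfl⟩

theorem exists_subset_image_supp (hTU : T ⊆ U) (hT : (G.induce T).Connected) :
    ∃ K : (G.induce U).ConnectedComponent, T ⊆ Subtype.val '' K.supp := by
  obtain ⟨t⟩ := hT.nonempty
  refine ⟨(G.induce U).connectedComponentMk (inclusion hTU t), fun x hx ↦ ⟨⟨x, hTU hx⟩, ?_, rfl⟩⟩
  exact SimpleGraph.ConnectedComponent.sound
    ((hT.preconnected ⟨x, hx⟩ t).map (G.induceHomOfLE hTU).toHom)

theorem ncard_image_supp (K : (G.induce U).ConnectedComponent) :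
    (Subtype.val '' K.supp).ncard = K.supp.ncard :=
  ncard_image_of_injective _ Subtype.val_injective

/-- The bound "every connected component of `G[U]` has at most `s` vertices". The threshold `s` is
real because it is later chosen as a real power. -/
def ComponentsLE (G : SimpleGraph V) (U : Set V) (s : ℝ) : Prop :=
  ∀ K : (G.induce U).ConnectedComponent, (K.supp.ncard : ℝ) ≤ s

theorem componentsLE_iff_forall_connected [Finite V] :
    ComponentsLE G U s ↔ ∀ T ⊆ U, (G.induce T).Connected → (T.ncard : ℝ) ≤ s := by
  refine ⟨fun h T hTU hT ↦ ?_, fun h K ↦ ?_⟩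
  · obtain ⟨K, hTK⟩ := exists_subset_image_supp hTU hT
    have hle : T.ncard ≤ K.supp.ncard := ncard_image_supp K ▸ ncard_le_ncard hTK
    exact (Nat.cast_le.2 hle).trans (h K)
  · rw [← ncard_image_supp]
    exact h _ (Subtype.coe_image_subset _ _) (connected_induce_image_supp K)

theorem ComponentsLE.mono {t : ℝ} (h : ComponentsLE G U s) (hst : s ≤ t) : ComponentsLE G U t :=
  fun K ↦ (h K).trans hst

theorem componentsLE_ncard [Finite V] (G : SimpleGraph V) (U : Set V) :
    ComponentsLE G U U.ncard :=
  componentsLE_iff_forall_connected.2 fun _ hTU _ ↦ Nat.cast_le.2 (ncard_le_ncard hTU)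

theorem componentsLE_sdiff_iUnion [Finite V] {X : (G.induce U).ConnectedComponent → Set V}
    (h : ∀ K, ComponentsLE G (Subtype.val '' K.supp \ X K) s) :
    ComponentsLE G (U \ ⋃ K, X K) s := by
  refine componentsLE_iff_forall_connected.2 fun T hT hconn ↦ ?_
  obtain ⟨K, hTK⟩ := exists_subset_image_supp (hT.trans sdiff_subset) hconn
  have hTX : T ⊆ Subtype.val '' K.supp \ X K :=
    fun x hx ↦ ⟨hTK hx, fun hxX ↦ (hT hx).2 (mem_iUnion_of_mem K hxX)⟩
  exact componentsLE_iff_forall_connected.1 (h K) T hTX hconn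

end ConnectedComponents

section Separators

variable {V : Type*} {G : SimpleGraph V} {ρ c η s t : ℝ}

/-- Every induced subgraph `G[A]` has a `ρ`-balanced separator of size at most `c * |A| ^ η`: a set
whose deletion leaves components with at most `ρ * |A|` vertices. The separator need not lie inside
`A`, which makes no difference, since only its trace on `A` matters. -/
def HasBalancedSeparators (G : SimpleGraph V) (ρ c η : ℝ) : Prop :=
  ∀ A : Set V, ∃ X : Set V, (X.ncard : ℝ) ≤ c * (A.ncard : ℝ) ^ η ∧
    ComponentsLE G (A \ X) (ρ * A.ncard)

theorem deleteVerts_induce_top (G : SimpleGraph V) (A X : Set V) :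
    ((⊤ : G.Subgraph).induce A).deleteVerts X = (⊤ : G.Subgraph).induce (A \ X) := by
  ext <;> simp +contextual

theorem hasBalancedSeparators_of_subgraph
    (h : ∀ H : G.Subgraph, ∃ X : Set V, (X.ncard : ℝ) ≤ c * (H.verts.ncard : ℝ) ^ η ∧
      ∀ K : (H.deleteVerts X).coe.ConnectedComponent,
        3 * K.supp.ncard ≤ 2 * H.verts.ncard) :
    HasBalancedSeparators G (2 / 3) c η := by
  intro A
  obtain ⟨X, hcard, hcomp⟩ := h ((⊤ : G.Subgraph).induce A)
  rw [deleteVerts_induce_top, ← SimpleGraph.induce_eq_coe_induce_top] at hcomp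
  refine ⟨X, hcard, fun K ↦ ?_⟩
  have hK : (3 * K.supp.ncard : ℝ) ≤ 2 * A.ncard := mod_cast hcomp K
  linarith

namespace HasBalancedSeparators

theorem exists_separator_ncard_le_mul (h : HasBalancedSeparators G ρ c η) (hc : 0 ≤ c)
    (hη : η ≤ 1) (hs : 0 < s) {A : Set V} (hAs : s < A.ncard) :
    ∃ X : Set V, (X.ncard : ℝ) ≤ c * s ^ (η - 1) * A.ncard ∧
      ComponentsLE G (A \ X) (ρ * A.ncard) := by
  obtain ⟨X, hXcard, hX⟩ := h A
  have hA : (0 : ℝ) < A.ncard := hs.trans hAs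
  refine ⟨X, ?_, hX⟩
  calc (X.ncard : ℝ) ≤ c * (A.ncard : ℝ) ^ η := hXcard
    _ = c * (A.ncard : ℝ) ^ (η - 1) * A.ncard := by
      rw [mul_assoc, ← Real.rpow_add_one hA.ne', sub_add_cancel]
    _ ≤ c * s ^ (η - 1) * A.ncard := by
      gcongr c * ?_ * _
      exact Real.rpow_le_rpow_of_nonpos hs hAs.le (sub_nonpos.2 hη)

variable [Finite V] {U : Set V}

theorem exists_componentsLE_sdiff_of_mul_le (h : HasBalancedSeparators G ρ c η) (hc : 0 ≤ c)
    (hη : η ≤ 1) (hρ : 0 ≤ ρ) (hs : 0 < s) (hU : ComponentsLE G U t) (hts : ρ * t ≤ s) :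
    ∃ X : Set V, (X.ncard : ℝ) ≤ c * s ^ (η - 1) * U.ncard ∧ ComponentsLE G (U \ X) s := by
  have hsep (K : (G.induce U).ConnectedComponent) : ∃ X : Set V,
      (X.ncard : ℝ) ≤ c * s ^ (η - 1) * K.supp.ncard ∧
        ComponentsLE G (Subtype.val '' K.supp \ X) s := by
    rw [← ncard_image_supp]
    rcases le_or_gt ((Subtype.val '' K.supp).ncard : ℝ) s with hsmall | hlarge
    · refine ⟨∅, by rw [ncard_empty, Nat.cast_zero]; positivity, ?_⟩
      rw [sdiff_empty]
      exact (componentsLE_ncard _ _).mono hsmall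
    · obtain ⟨X, hXcard, hX⟩ := h.exists_separator_ncard_le_mul hc hη hs hlarge
      refine ⟨X, hXcard, hX.mono (le_trans ?_ hts)⟩
      rw [ncard_image_supp]
      exact mul_le_mul_of_nonneg_left (hU K) hρ
  choose X hXcard hX using hsep
  have := Fintype.ofFinite (G.induce U).ConnectedComponent
  refine ⟨⋃ K, X K, ?_, componentsLE_sdiff_iUnion hX⟩
  calc ((⋃ K, X K).ncard : ℝ) ≤ ∑ K, ((X K).ncard : ℝ) := mod_cast ncard_iUnion_le_of_fintype X
    _ ≤ ∑ K : (G.induce U).ConnectedComponent, c * s ^ (η - 1) * K.supp.ncard :=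
      Finset.sum_le_sum fun K _ ↦ hXcard K
    _ = c * s ^ (η - 1) * U.ncard := by
      rw [← Finset.mul_sum, ← Nat.cast_sum, sum_ncard_supp, Nat.card_coe_set_eq]

theorem exists_componentsLE_sdiff (h : HasBalancedSeparators G ρ c η) (hc : 0 ≤ c) (hη : η < 1)
    (hρ₀ : 0 < ρ) (hρ₁ : ρ < 1) (hs : 0 < s) (U : Set V) :
    ∃ S : Set V, (S.ncard : ℝ) ≤ c / (1 - ρ ^ (1 - η)) * s ^ (η - 1) * U.ncard ∧
      ComponentsLE G (U \ S) s := by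
  have hratio : 0 < 1 - ρ ^ (1 - η) :=
    sub_pos.2 (Real.rpow_lt_one hρ₀.le hρ₁ (sub_pos.2 hη))
  obtain ⟨n, hn⟩ : ∃ n : ℕ, U.ncard * ρ ^ n ≤ s :=
    ((tendsto_pow_atTop_nhds_zero_of_lt_one hρ₀.le hρ₁).const_mul (U.ncard : ℝ)
      |>.eventually_le_const (by simpa using hs)).exists
  induction n generalizing s with
  | zero =>
    refine ⟨∅, by rw [ncard_empty, Nat.cast_zero]; positivity, ?_⟩
    rw [sdiff_empty]
    exact (componentsLE_ncard G U).mono (by simpa using hn)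
  | succ n ih =>
    obtain ⟨S, hScard, hS⟩ := ih (div_pos hs hρ₀) <| by
      rwa [le_div_iff₀ hρ₀, mul_assoc, ← pow_succ]
    obtain ⟨X, hXcard, hX⟩ :=
      h.exists_componentsLE_sdiff_of_mul_le hc hη.le hρ₀.le hs hS (mul_div_cancel₀ s hρ₀.ne').le
    refine ⟨S ∪ X, ?_, sdiff_sdiff (s := U) ▸ hX⟩
    have hscale : (s / ρ) ^ (η - 1) = s ^ (η - 1) * ρ ^ (1 - η) := by
      rw [Real.div_rpow hs.le hρ₀.le, ← neg_sub 1 η, Real.rpow_neg hρ₀.le, div_inv_eq_mul]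
    calc ((S ∪ X).ncard : ℝ) ≤ S.ncard + X.ncard := mod_cast ncard_union_le S X
      _ ≤ c / (1 - ρ ^ (1 - η)) * (s / ρ) ^ (η - 1) * U.ncard + c * s ^ (η - 1) * U.ncard := by
        refine add_le_add hScard (hXcard.trans ?_)
        gcongr
        exacts [U.toFinite, sdiff_subset]
      _ = c / (1 - ρ ^ (1 - η)) * s ^ (η - 1) * U.ncard := by
        rw [hscale]
        field_simp
        ring

end HasBalancedSeparators

end Separators

theorem stmt18_general {ρ c η : ℝ} (hρ₀ : 0 < ρ) (hρ₁ : ρ < 1) (hc : 0 < c) (hη : η < 1) :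
    ∃ C : ℝ, 0 < C ∧
      ∀ (α : Type u) (_ : Fintype α) (G : SimpleGraph α), HasBalancedSeparators G ρ c η →
        ∀ β : ℝ, 0 < β →
          ∃ S : Set α, (S.ncard : ℝ) ≤ β * (Fintype.card α : ℝ) ∧
            ComponentsLE G Sᶜ ((C / β) ^ (1 / (1 - η))) := by
  have hC : 0 < c / (1 - ρ ^ (1 - η)) :=
    div_pos hc (sub_pos.2 (Real.rpow_lt_one hρ₀.le hρ₁ (sub_pos.2 hη)))
  refine ⟨_, hC, fun α _ G hG β hβ ↦ ?_⟩
  generalize hCdef : c / (1 - ρ ^ (1 - η)) = C at hC ⊢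
  have hfraction : C * ((C / β) ^ (1 / (1 - η))) ^ (η - 1) = β := by
    have hexp : 1 / (1 - η) * (η - 1) = -1 := by
      have := (sub_pos.2 hη).ne'
      field_simp
      ring
    rw [← Real.rpow_mul (by positivity), hexp, Real.rpow_neg_one, inv_div, mul_div_cancel₀ β hC.ne']
  obtain ⟨S, hScard, hS⟩ := hG.exists_componentsLE_sdiff hc.le hη hρ₀ hρ₁
    (s := (C / β) ^ (1 / (1 - η))) (by positivity) univ
  rw [hCdef, hfraction, ncard_univ, Nat.card_eq_fintype_card] at hScard
  exact ⟨S, hScard, compl_eq_univ_sdiff S ▸ hS⟩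

/-- for all `c > 0` and `0 ≤ η < 1` there is a constant `C`
(depending only on `c` and `η`) such that: for every finite graph `G` all of
whose subgraphs `H` admit a balanced separator of size at most `c·|V(H)|^η`
(i.e. a set `X ⊆ V(H)` such that every connected component of `H − X` has at
most `2|V(H)|/3` vertices), and for every `β ∈ (0,1]`, there is a set
`S ⊆ V(G)` with `|S| ≤ β·n` such that every connected component of `G − S` has
at most `(C/β)^{1/(1−η)}` vertices. -/
theorem stmt18 (c η : ℝ) (hc : 0 < c) (hη0 : 0 ≤ η) (hη1 : η < 1) :
    ∃ C : ℝ, 0 < C ∧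
      ∀ (α : Type) (_ : Fintype α) (G : SimpleGraph α),
        (∀ H : G.Subgraph, ∃ X : Set α, X ⊆ H.verts ∧
          ((X.ncard : ℝ) ≤ c * (H.verts.ncard : ℝ) ^ η) ∧
          ∀ K : (H.deleteVerts X).coe.ConnectedComponent,
            3 * K.supp.ncard ≤ 2 * H.verts.ncard) →
        ∀ β : ℝ, 0 < β → β ≤ 1 →
          ∃ S : Set α, ((S.ncard : ℝ) ≤ β * (Fintype.card α : ℝ)) ∧
            ∀ K : (G.induce Sᶜ).ConnectedComponent,
              (K.supp.ncard : ℝ) ≤ (C / β) ^ ((1 : ℝ) / (1 - η)) := by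
  obtain ⟨C, hC, h⟩ := stmt18_general (ρ := 2 / 3) (by norm_num) (by norm_num) hc hη1
  refine ⟨C, hC, fun α _ G hG β hβ _ ↦ h α _ G (hasBalancedSeparators_of_subgraph ?_) β hβ⟩
  exact fun H ↦ (hG H).imp fun _ hX ↦ hX.2
end
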